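/- Let C be a pivotal category. The morphisms ψ_X = (ev_r(X) ⊗ id_{X**})(id_X ⊗ coev_l(X*)) : X → X** form a pivotal structure on C: each ψ_X is an isomorphism, ψ is natural in X, ψ_𝟙 = id_𝟙 (under the identification 𝟙** = 𝟙 given by the duality morphisms of 𝟙), and ψ_{X⊗Y} = ψ_X ⊗ ψ_Y under the identification (X⊗Y)** = X** ⊗ Y** given by the (coinciding) monoidal constraints. -/

import Mathlib

open CategoryTheory CategoryTheory.Limits MonoidalCategory

universe v u w

/-- A pivotal category: a monoidal category in which every object is equipped with a dual
object and with evaluation/coevaluation morphisms forming a left duality and a right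
duality, such that left and right duals of morphisms coincide, the left and right
monoidal constraints coincide, and the left and right evaluations of the unit coincide. -/
class PivotalCat (C : Type u) [Category.{v} C] [MonoidalCategory C] where
  dual : C → C
  evl : ∀ X : C, dual X ⊗ X ⟶ 𝟙_ C
  coevl : ∀ X : C, 𝟙_ C ⟶ X ⊗ dual X
  evr : ∀ X : C, X ⊗ dual X ⟶ 𝟙_ C
  coevr : ∀ X : C, 𝟙_ C ⟶ dual X ⊗ X
  left_zigzag₁ : ∀ X : C,
    (λ_ X).inv ≫ (coevl X ▷ X) ≫ (α_ X (dual X) X).hom ≫ (X ◁ evl X) ≫ (ρ_ X).hom = 𝟙 X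
  left_zigzag₂ : ∀ X : C,
    (ρ_ (dual X)).inv ≫ (dual X ◁ coevl X) ≫ (α_ (dual X) X (dual X)).inv ≫
      (evl X ▷ dual X) ≫ (λ_ (dual X)).hom = 𝟙 (dual X)
  right_zigzag₁ : ∀ X : C,
    (ρ_ X).inv ≫ (X ◁ coevr X) ≫ (α_ X (dual X) X).inv ≫ (evr X ▷ X) ≫ (λ_ X).hom = 𝟙 X
  right_zigzag₂ : ∀ X : C,
    (λ_ (dual X)).inv ≫ (coevr X ▷ dual X) ≫ (α_ (dual X) X (dual X)).hom ≫
      (dual X ◁ evr X) ≫ (ρ_ (dual X)).hom = 𝟙 (dual X)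
  ldual_eq_rdual : ∀ {X Y : C} (f : X ⟶ Y),
    (ρ_ (dual Y)).inv ≫ (dual Y ◁ coevl X) ≫ (dual Y ◁ (f ▷ dual X)) ≫
      (α_ (dual Y) Y (dual X)).inv ≫ (evl Y ▷ dual X) ≫ (λ_ (dual X)).hom =
    (λ_ (dual Y)).inv ≫ (coevr X ▷ dual Y) ≫ ((dual X ◁ f) ▷ dual Y) ≫
      (α_ (dual X) Y (dual Y)).hom ≫ (dual X ◁ evr Y) ≫ (ρ_ (dual X)).hom
  constraint_eq : ∀ X Y : C,
    (ρ_ (dual X ⊗ dual Y)).inv ≫ ((dual X ⊗ dual Y) ◁ coevl (Y ⊗ X)) ≫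
      (α_ (dual X) (dual Y) ((Y ⊗ X) ⊗ dual (Y ⊗ X))).hom ≫
      (dual X ◁ (α_ (dual Y) (Y ⊗ X) (dual (Y ⊗ X))).inv) ≫
      (dual X ◁ (((α_ (dual Y) Y X).inv ≫ (evl Y ▷ X) ≫ (λ_ X).hom) ▷ dual (Y ⊗ X))) ≫
      (α_ (dual X) X (dual (Y ⊗ X))).inv ≫ (evl X ▷ dual (Y ⊗ X)) ≫ (λ_ (dual (Y ⊗ X))).hom =
    (λ_ (dual X ⊗ dual Y)).inv ≫ (coevr (Y ⊗ X) ▷ (dual X ⊗ dual Y)) ≫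
      (α_ (dual (Y ⊗ X)) (Y ⊗ X) (dual X ⊗ dual Y)).hom ≫
      (dual (Y ⊗ X) ◁ ((α_ Y X (dual X ⊗ dual Y)).hom ≫ (Y ◁ (α_ X (dual X) (dual Y)).inv) ≫
        (Y ◁ (evr X ▷ dual Y)) ≫ (Y ◁ (λ_ (dual Y)).hom) ≫ evr Y)) ≫
      (ρ_ (dual (Y ⊗ X))).hom
  ev_unit : (ρ_ (dual (𝟙_ C))).inv ≫ evl (𝟙_ C) = (λ_ (dual (𝟙_ C))).inv ≫ evr (𝟙_ C)

namespace PivotalCat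

variable {C : Type u} [Category.{v} C] [MonoidalCategory C] [PivotalCat C]

/-- The (common left = right) dual of a morphism. -/
def pdual {X Y : C} (f : X ⟶ Y) : dual Y ⟶ dual X :=
  (ρ_ (dual Y)).inv ≫ (dual Y ◁ coevl X) ≫ (dual Y ◁ (f ▷ dual X)) ≫
    (α_ (dual Y) Y (dual X)).inv ≫ (evl Y ▷ dual X) ≫ (λ_ (dual X)).hom

/-- The (common left = right) pivotal monoidal constraint `X* ⊗ Y* ⟶ (Y ⊗ X)*`. -/
def mcon (X Y : C) : dual X ⊗ dual Y ⟶ dual (Y ⊗ X) :=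
  (ρ_ (dual X ⊗ dual Y)).inv ≫ ((dual X ⊗ dual Y) ◁ coevl (Y ⊗ X)) ≫
    (α_ (dual X) (dual Y) ((Y ⊗ X) ⊗ dual (Y ⊗ X))).hom ≫
    (dual X ◁ (α_ (dual Y) (Y ⊗ X) (dual (Y ⊗ X))).inv) ≫
    (dual X ◁ (((α_ (dual Y) Y X).inv ≫ (evl Y ▷ X) ≫ (λ_ X).hom) ▷ dual (Y ⊗ X))) ≫
    (α_ (dual X) X (dual (Y ⊗ X))).inv ≫ (evl X ▷ dual (Y ⊗ X)) ≫ (λ_ (dual (Y ⊗ X))).hom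

/-- The left trace of an endomorphism. -/
def trl {X : C} (f : X ⟶ X) : 𝟙_ C ⟶ 𝟙_ C := coevr X ≫ (dual X ◁ f) ≫ evl X

/-- The right trace of an endomorphism. -/
def trr {X : C} (f : X ⟶ X) : 𝟙_ C ⟶ 𝟙_ C := coevl X ≫ (f ▷ dual X) ≫ evr X

/-- The left dimension of an object, as an endomorphism of the unit. -/
def diml (X : C) : 𝟙_ C ⟶ 𝟙_ C := trl (𝟙 X)

/-- The right dimension of an object, as an endomorphism of the unit. -/
def dimr (X : C) : 𝟙_ C ⟶ 𝟙_ C := trr (𝟙 X)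

/-- The permutation map `σ_{X,Y} : Hom(𝟙, X ⊗ Y) → Hom(𝟙, Y ⊗ X)`,
`α ↦ (ev_l X ⊗ id_{Y⊗X}) ∘ (id_{X*} ⊗ α ⊗ id_X) ∘ coev_r X`. -/
def sigmaMap (X Y : C) (a : 𝟙_ C ⟶ X ⊗ Y) : 𝟙_ C ⟶ Y ⊗ X :=
  coevr X ≫ (dual X ◁ (λ_ X).inv) ≫ (dual X ◁ (a ▷ X)) ≫ (dual X ◁ (α_ X Y X).hom) ≫
    (α_ (dual X) X (Y ⊗ X)).inv ≫ (evl X ▷ (Y ⊗ X)) ≫ (λ_ (Y ⊗ X)).hom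

end PivotalCat

/-- A pivotal category is spherical when left and right traces coincide. -/
class SphericalCat (C : Type u) [Category.{v} C] [MonoidalCategory C] [PivotalCat C] : Prop where
  tr_eq : ∀ {X : C} (f : X ⟶ X), PivotalCat.trl f = PivotalCat.trr f

namespace PivotalCat

variable {C : Type u} [Category.{v} C] [MonoidalCategory C] [PivotalCat C]

/-- The canonical morphism `ψ_X = (ev_r X ⊗ id_{X**}) ∘ (id_X ⊗ coev_l (X*)) : X ⟶ X**`. -/
def psi (X : C) : X ⟶ dual (dual X) :=
  (ρ_ X).inv ≫ (X ◁ coevl (dual X)) ≫ (α_ X (dual X) (dual (dual X))).inv ≫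
    (evr X ▷ dual (dual X)) ≫ (λ_ (dual (dual X))).hom

/-- The identification `𝟙 ≅ 𝟙**` given by the duality morphisms of the unit object. -/
def unitPsi : 𝟙_ C ⟶ dual (dual (𝟙_ C)) :=
  coevl (dual (𝟙_ C)) ≫ (((ρ_ (dual (𝟙_ C))).inv ≫ evl (𝟙_ C)) ▷ dual (dual (𝟙_ C))) ≫
    (λ_ (dual (dual (𝟙_ C)))).hom

end PivotalCat

/-! Since `(ev_r, coev_r)` makes `X` a right dual of `X*` and `(ev_l, coev_l)` makes `X**` another
one, `ψ_X` is the canonical isomorphism between two right duals of the same object: the unique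
morphism carrying `ev_l (X*)` to `ev_r X`. A morphism into `X*` is determined by its pairing with
`X` under `ev_l`, so identities between such morphisms may be checked after pairing. Naturality then
reduces to the equality of left and right duals of morphisms, and monoidality to that of the left
and right monoidal constraints. -/

namespace PivotalCat

section ExactPairing

variable {C : Type u} [Category.{v} C] [MonoidalCategory C]

theorem hom_ext_evaluation {A X Y : C} [ExactPairing X Y] {f g : A ⟶ Y}
    (h : f ▷ X ≫ ε_ X Y = g ▷ X ≫ ε_ X Y) : f = g := by
  have transpose_eq (k : A ⟶ Y) : tensorRightHomEquiv A X Y (𝟙_ C) (k ▷ X ≫ ε_ X Y) =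
      k ≫ (λ_ Y).inv :=
    @tensorRightHomEquiv_whiskerRight_comp_evaluation C _ _ X A ⟨Y⟩ k
  rw [← cancel_mono (λ_ Y).inv, ← transpose_eq, h, transpose_eq]

theorem rightDualIso_hom_whiskerRight_evaluation {X Y₁ Y₂ : C}
    (p₁ : ExactPairing X Y₁) (p₂ : ExactPairing X Y₂) :
    (rightDualIso p₁ p₂).hom ▷ X ≫ ε_ X Y₂ = ε_ X Y₁ :=
  (@rightAdjointMate_comp_evaluation C _ _ X X ⟨Y₂⟩ ⟨Y₁⟩ (𝟙 X)).trans (by simp)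

theorem whiskerLeft_leftDualIso_hom_evaluation {X₁ X₂ Y : C}
    (p₁ : ExactPairing X₁ Y) (p₂ : ExactPairing X₂ Y) :
    Y ◁ (leftDualIso p₁ p₂).hom ≫ ε_ X₂ Y = ε_ X₁ Y :=
  (@leftAdjointMate_comp_evaluation C _ _ Y Y ⟨X₂⟩ ⟨X₁⟩ (𝟙 Y)).trans (by simp)

theorem tensorHom_whiskerRight_evaluation {X₁ X₂ Y₁ Y₂ Z₁ Z₂ : C}
    [ExactPairing X₁ Y₁] [ExactPairing X₂ Y₂] [ExactPairing X₁ Z₁] [ExactPairing X₂ Z₂]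
    {f₁ : Y₁ ⟶ Z₁} {f₂ : Y₂ ⟶ Z₂}
    (h₁ : f₁ ▷ X₁ ≫ ε_ X₁ Z₁ = ε_ X₁ Y₁) (h₂ : f₂ ▷ X₂ ≫ ε_ X₂ Z₂ = ε_ X₂ Y₂) :
    (f₂ ⊗ₘ f₁) ▷ (X₁ ⊗ X₂) ≫ ε_ (X₁ ⊗ X₂) (Z₂ ⊗ Z₁) = ε_ (X₁ ⊗ X₂) (Y₂ ⊗ Y₁) := by
  rw [ExactPairing.tensor_evaluation, ExactPairing.tensor_evaluation, tensorHom_def']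
  calc
    _ = 𝟙 _ ⊗≫ Y₂ ◁ ((f₁ ▷ X₁) ▷ X₂) ⊗≫
          (f₂ ▷ ((Z₁ ⊗ X₁) ⊗ X₂) ≫ Z₂ ◁ (ε_ X₁ Z₁ ▷ X₂)) ⊗≫ ε_ X₂ Z₂ := by monoidal
    _ = 𝟙 _ ⊗≫ Y₂ ◁ ((f₁ ▷ X₁ ≫ ε_ X₁ Z₁) ▷ X₂) ⊗≫ (f₂ ▷ X₂ ≫ ε_ X₂ Z₂) := by
      rw [← whisker_exchange]; monoidal
    _ = _ := by rw [h₁, h₂]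

end ExactPairing

variable {C : Type u} [Category.{v} C] [MonoidalCategory C] [PivotalCat C]

/-- The left duality of `X`, as an exact pairing exhibiting `dual X` as a right dual of `X` in
Mathlib's convention. -/
instance leftPairing (X : C) : ExactPairing X (dual X) where
  coevaluation' := coevl X
  evaluation' := evl X
  coevaluation_evaluation' := by
    rw [← cancel_mono (λ_ _).hom]
    simpa [Iso.inv_comp_eq] using left_zigzag₂ X
  evaluation_coevaluation' := by
    rw [← cancel_mono (ρ_ _).hom]
    simpa [Iso.inv_comp_eq] using left_zigzag₁ X

/-- The right duality of `X`, as an exact pairing exhibiting `X` as a right dual of `dual X` in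
Mathlib's convention. -/
instance rightPairing (X : C) : ExactPairing (dual X) X where
  coevaluation' := coevr X
  evaluation' := evr X
  coevaluation_evaluation' := by
    rw [← cancel_mono (λ_ _).hom]
    simpa [Iso.inv_comp_eq] using right_zigzag₁ X
  evaluation_coevaluation' := by
    rw [← cancel_mono (ρ_ _).hom]
    simpa [Iso.inv_comp_eq] using right_zigzag₂ X

theorem hom_ext_evl {A X : C} {f g : A ⟶ dual X} (h : f ▷ X ≫ evl X = g ▷ X ≫ evl X) : f = g :=
  hom_ext_evaluation h

theorem pdual_whiskerRight_evl {X Y : C} (f : X ⟶ Y) :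
    pdual f ▷ X ≫ evl X = dual Y ◁ f ≫ evl Y :=
  @rightAdjointMate_comp_evaluation C _ _ X Y ⟨dual X⟩ ⟨dual Y⟩ f

theorem whiskerLeft_pdual_evr {X Y : C} (f : X ⟶ Y) :
    X ◁ pdual f ≫ evr X = f ▷ dual Y ≫ evr Y := by
  rw [pdual, ldual_eq_rdual]
  exact @leftAdjointMate_comp_evaluation C _ _ X Y ⟨dual X⟩ ⟨dual Y⟩ f

theorem psi_eq_rightDualIso_hom (X : C) :
    psi X = (rightDualIso (rightPairing X) (leftPairing (dual X))).hom := by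
  simp only [rightDualIso, rightAdjointMate, id_whiskerRight, MonoidalCategory.whiskerLeft_id,
    Category.id_comp]
  rfl

theorem psi_whiskerRight_evl (X : C) : psi X ▷ dual X ≫ evl (dual X) = evr X := by
  rw [psi_eq_rightDualIso_hom]
  exact rightDualIso_hom_whiskerRight_evaluation _ _

theorem isIso_psi (X : C) : IsIso (psi X) := by
  rw [psi_eq_rightDualIso_hom]
  infer_instance

theorem psi_naturality {X Y : C} (f : X ⟶ Y) : f ≫ psi Y = psi X ≫ pdual (pdual f) := by
  apply hom_ext_evl
  calc
    (f ≫ psi Y) ▷ dual Y ≫ evl (dual Y)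
    _ = f ▷ dual Y ≫ evr Y := by
      rw [comp_whiskerRight, Category.assoc, psi_whiskerRight_evl]
    _ = X ◁ pdual f ≫ psi X ▷ dual X ≫ evl (dual X) := by
      rw [psi_whiskerRight_evl, whiskerLeft_pdual_evr]
    _ = (psi X ≫ pdual (pdual f)) ▷ dual Y ≫ evl (dual Y) := by
      rw [comp_whiskerRight, Category.assoc, pdual_whiskerRight_evl, whisker_exchange_assoc]

theorem psi_unit : psi (𝟙_ C) = unitPsi := by
  have evr_unit : evr (𝟙_ C) = (λ_ _).hom ≫ (ρ_ _).inv ≫ evl (𝟙_ C) := by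
    rw [ev_unit, Iso.hom_inv_id_assoc]
  rw [psi, unitPsi, evr_unit]
  monoidal

theorem mcon_eq_rightDualIso_hom (X Y : C) :
    mcon X Y = (rightDualIso ExactPairing.tensor (leftPairing (Y ⊗ X))).hom := by
  change _ = (ρ_ _).inv ≫ _ ◁ coevl (Y ⊗ X) ≫ _ ◁ (𝟙 (Y ⊗ X)) ▷ _ ≫ (α_ _ _ _).inv ≫
    (𝟙 _ ⊗≫ dual X ◁ (evl Y ▷ X) ⊗≫ evl X) ▷ _ ≫ (λ_ _).hom
  rw [mcon]
  monoidal

theorem mcon_eq_leftDualIso_hom (X Y : C) :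
    mcon X Y = (leftDualIso ExactPairing.tensor (rightPairing (Y ⊗ X))).hom := by
  change _ = (λ_ _).inv ≫ coevr (Y ⊗ X) ▷ _ ≫ (_ ◁ (𝟙 (Y ⊗ X))) ▷ _ ≫ (α_ _ _ _).hom ≫
    _ ◁ (𝟙 _ ⊗≫ Y ◁ (evr X ▷ dual Y) ⊗≫ evr Y) ≫ (ρ_ _).hom
  rw [mcon, constraint_eq]
  monoidal

theorem mcon_whiskerRight_evl (X Y : C) :
    mcon X Y ▷ (Y ⊗ X) ≫ evl (Y ⊗ X) = ε_ (Y ⊗ X) (dual X ⊗ dual Y) := by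
  rw [mcon_eq_rightDualIso_hom]
  exact rightDualIso_hom_whiskerRight_evaluation _ _

theorem whiskerLeft_mcon_evr (X Y : C) :
    (Y ⊗ X) ◁ mcon X Y ≫ evr (Y ⊗ X) = ε_ (dual X ⊗ dual Y) (Y ⊗ X) := by
  rw [mcon_eq_leftDualIso_hom]
  exact whiskerLeft_leftDualIso_hom_evaluation _ _

theorem psi_tensor (X Y : C) :
    psi (X ⊗ Y) ≫ pdual (mcon Y X) = (psi X ⊗ₘ psi Y) ≫ mcon (dual X) (dual Y) := by
  apply hom_ext_evl
  calc
    (psi (X ⊗ Y) ≫ pdual (mcon Y X)) ▷ (dual Y ⊗ dual X) ≫ evl (dual Y ⊗ dual X)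
    _ = (X ⊗ Y) ◁ mcon Y X ≫ psi (X ⊗ Y) ▷ dual (X ⊗ Y) ≫ evl (dual (X ⊗ Y)) := by
      rw [comp_whiskerRight, Category.assoc, pdual_whiskerRight_evl, whisker_exchange_assoc]
    _ = ε_ (dual Y ⊗ dual X) (X ⊗ Y) := by rw [psi_whiskerRight_evl, whiskerLeft_mcon_evr]
    _ = (psi X ⊗ₘ psi Y) ▷ (dual Y ⊗ dual X) ≫
          ε_ (dual Y ⊗ dual X) (dual (dual X) ⊗ dual (dual Y)) :=
      (tensorHom_whiskerRight_evaluation (psi_whiskerRight_evl Y) (psi_whiskerRight_evl X)).symm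
    _ = ((psi X ⊗ₘ psi Y) ≫ mcon (dual X) (dual Y)) ▷ (dual Y ⊗ dual X) ≫
          evl (dual Y ⊗ dual X) := by
      rw [comp_whiskerRight, Category.assoc, mcon_whiskerRight_evl]

end PivotalCat

open PivotalCat in
/-- In a pivotal category, the morphisms `ψ_X = (ev_r X ⊗ id_{X**}) ∘ (id_X ⊗ coev_l (X*))`
form a pivotal structure: each `ψ_X` is an isomorphism, `ψ` is natural, `ψ_𝟙 = id_𝟙`
(under the identification `𝟙** = 𝟙` given by the duality morphisms of `𝟙`), and
`ψ_{X⊗Y} = ψ_X ⊗ ψ_Y` (under the identification `(X⊗Y)** = X** ⊗ Y**` given by the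
monoidal constraints). -/
theorem psi_is_pivotal_structure {C : Type u} [Category.{v} C] [MonoidalCategory C]
    [PivotalCat C] :
    (∀ X : C, IsIso (psi X)) ∧
    (∀ {X Y : C} (f : X ⟶ Y), f ≫ psi Y = psi X ≫ pdual (pdual f)) ∧
    (psi (𝟙_ C) = unitPsi) ∧
    (∀ X Y : C, psi (X ⊗ Y) ≫ pdual (mcon Y X) =
      (psi X ⊗ₘ psi Y) ≫ mcon (dual X) (dual Y)) :=
  ⟨isIso_psi, psi_naturality, psi_unit, psi_tensor⟩
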